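/- (Inequality (1.32)) Let ν ≥ 3 and M ≥ 1. For simple random walk on ℤ^ν started at e_1 (the first canonical basis vector), limsup_{N→∞} Q_{e_1}[H_{Nℤ^ν} < M N²] ≤ q(ν), where H_{Nℤ^ν} is the entrance time into the sublattice Nℤ^ν. Equivalently, the probability that simple random walk on the torus (ℤ/Nℤ)^ν started at the (image of the) point e_1 hits the origin before time MN² has limsup at most q(ν) as N → ∞. -/

import Mathlib

open MeasureTheory Filter
open scoped ENNReal Classical

namespace DiscCyl

/-- The lattice `ℤ^{d+1}`. -/
abbrev Lat (d : ℕ) := Fin (d + 1) → ℤ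

/-- The discrete cylinder `E = (ℤ/Nℤ)^d × ℤ`. -/
abbrev Cyl (d N : ℕ) := (Fin d → ZMod N) × ℤ

instance (N : ℕ) : MeasurableSpace (ZMod N) := ⊤

instance (N : ℕ) : Countable (ZMod N) := by
  cases N with
  | zero => exact inferInstanceAs (Countable ℤ)
  | succ n => exact inferInstanceAs (Countable (Fin (n + 1)))

/-- The canonical projection `π_E : ℤ^{d+1} → E`. -/
def projE (d N : ℕ) (v : Lat d) : Cyl d N :=
  (fun i => (v i.castSucc : ZMod N), v (Fin.last d))

/-- The `2(d+1)` unit vectors `±e_i` of `ℤ^{d+1}`. -/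
def unitVecs (d : ℕ) : Finset (Lat d) :=
  Finset.image (fun p : Fin (d + 1) × Bool => Pi.single p.1 (if p.2 then (1 : ℤ) else -1))
    Finset.univ

/-- One-step transition probability of simple random walk on the cylinder:
each of the `2(d+1)` unit moves of `ℤ^{d+1}` is taken with probability `1/(2(d+1))`
and projected to `E`. -/
noncomputable def stepProb (d N : ℕ) (x y : Cyl d N) : ℝ≥0∞ :=
  (((unitVecs d).filter fun e => x + projE d N e = y).card : ℝ≥0∞) / (2 * (d + 1))

/-- `Pl` is the family of laws (indexed by the starting point) of simple random walk
on the cylinder `E = (ℤ/Nℤ)^d × ℤ`. -/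
def IsCylRW (d N : ℕ) (Pl : Cyl d N → Measure (ℕ → Cyl d N)) : Prop :=
  (∀ x, IsProbabilityMeasure (Pl x)) ∧
    ∀ (x : Cyl d N) (n : ℕ) (γ : ℕ → Cyl d N),
      Pl x {ω | ∀ i ≤ n, ω i = γ i} =
        (if γ 0 = x then 1 else 0) * ∏ i ∈ Finset.range n, stepProb d N (γ i) (γ (i + 1))

/-- The lattice `ℤ^ν`. -/
abbrev ZLat (ν : ℕ) := Fin ν → ℤ

/-- Unit vectors of `ℤ^ν`. -/
def zUnitVecs (ν : ℕ) : Set (ZLat ν) :=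
  {v | ∃ i, v = Pi.single i 1 ∨ v = Pi.single i (-1)}

/-- One-step transition probability of simple random walk on `ℤ^ν`. -/
noncomputable def zStep (ν : ℕ) (x y : ZLat ν) : ℝ≥0∞ :=
  if y - x ∈ zUnitVecs ν then (2 * ν : ℝ≥0∞)⁻¹ else 0

/-- `Ql` is the family of laws of simple random walk on `ℤ^ν`. -/
def IsLatRW (ν : ℕ) (Ql : ZLat ν → Measure (ℕ → ZLat ν)) : Prop :=
  (∀ x, IsProbabilityMeasure (Ql x)) ∧
    ∀ (x : ZLat ν) (n : ℕ) (γ : ℕ → ZLat ν),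
      Ql x {ω | ∀ i ≤ n, ω i = γ i} =
        (if γ 0 = x then 1 else 0) * ∏ i ∈ Finset.range n, zStep ν (γ i) (γ (i + 1))

/-- `q(ν)`: the return probability to the origin of simple random walk on `ℤ^ν`. -/
noncomputable def retProb (ν : ℕ) (Ql : ZLat ν → Measure (ℕ → ZLat ν)) : ℝ :=
  ((Ql 0) {ω | ∃ n : ℕ, 1 ≤ n ∧ ω n = 0}).toReal

/-- Entrance time `H_U` (with value `⊤` if `U` is never entered). -/
noncomputable def entT {X : Type*} (U : Set X) (ω : ℕ → X) : ℕ∞ :=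
  sInf {t : ℕ∞ | ∃ n : ℕ, ω n ∈ U ∧ t = n}

/-- Exit time `T_U`. -/
noncomputable def exitT {X : Type*} (U : Set X) (ω : ℕ → X) : ℕ∞ :=
  entT Uᶜ ω

/-- `after t f ω = t + f (θ_t ω)`, with value `⊤` when `t = ⊤`. -/
noncomputable def after {X : Type*} (t : ℕ∞) (f : (ℕ → X) → ℕ∞) (ω : ℕ → X) : ℕ∞ :=
  t.recTopCoe ⊤ fun m => (m : ℕ∞) + f fun k => ω (k + m)

/-- The block `C_j = (ℤ/Nℤ)^d × ([(j-3/4)N, (j+3/4)N] ∩ ℤ)`. -/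
def Cblk (d N : ℕ) (j : ℤ) : Set (Cyl d N) :=
  {x | ((j : ℝ) - 3 / 4) * N ≤ (x.2 : ℝ) ∧ (x.2 : ℝ) ≤ ((j : ℝ) + 3 / 4) * N}

/-- The block `B_j = (ℤ/Nℤ)^d × [(j-1)N, (j+1)N]`. -/
def Bblk (d N : ℕ) (j : ℤ) : Set (Cyl d N) :=
  {x | (j - 1) * (N : ℤ) ≤ x.2 ∧ x.2 ≤ (j + 1) * (N : ℤ)}

/-- The block `B̃_j = (ℤ/Nℤ)^d × [(j-2)N+1, (j+2)N-1]`. -/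
def Btl (d N : ℕ) (j : ℤ) : Set (Cyl d N) :=
  {x | (j - 2) * (N : ℤ) + 1 ≤ x.2 ∧ x.2 ≤ (j + 2) * (N : ℤ) - 1}

/-- `D^j_1`: time of the first departure from `B̃_j` after the first return to `B_j`. -/
noncomputable def oneExc (d N : ℕ) (j : ℤ) (ω : ℕ → Cyl d N) : ℕ∞ :=
  after (entT (Bblk d N j) ω) (exitT (Btl d N j)) ω

/-- `D^j_k`: time of the `k`-th departure from `B̃_j` (after successive returns to `B_j`). -/
noncomputable def DD (d N : ℕ) (j : ℤ) : ℕ → (ℕ → Cyl d N) → ℕ∞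
  | 0, _ => 0
  | k + 1, ω => after (DD d N j k ω) (oneExc d N j) ω

/-- The law `P` of the walk with initial distribution uniform on `B_0`. -/
noncomputable def lawP (d N : ℕ) (Pl : Cyl d N → Measure (ℕ → Cyl d N)) :
    Measure (ℕ → Cyl d N) :=
  ((N : ℝ≥0∞) ^ d * (2 * N + 1))⁻¹ •
    Measure.sum fun x : Cyl d N => if x ∈ Bblk d N 0 then Pl x else 0

/-- Nearest-neighbour adjacency on the cylinder. -/
def adj (d N : ℕ) (x y : Cyl d N) : Prop :=
  x ≠ y ∧ ∃ e ∈ unitVecs d, y = x + projE d N e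

/-- `x` and `y` are connected by a nearest-neighbour path inside `S`. -/
def connIn (d N : ℕ) (S : Set (Cyl d N)) (x y : Cyl d N) : Prop :=
  Relation.ReflTransGen (fun a b => a ∈ S ∧ b ∈ S ∧ adj d N a b) x y

/-- `S` is a connected set. -/
def IsConnIn (d N : ℕ) (S : Set (Cyl d N)) : Prop :=
  ∀ x ∈ S, ∀ y ∈ S, connIn d N S x y

/-- The boundary `∂U`. -/
def bdry (d N : ℕ) (U : Set (Cyl d N)) : Set (Cyl d N) :=
  {x | x ∉ U ∧ ∃ y ∈ U, adj d N x y}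

/-- `ℓ^∞`-norm on `ℤ^{d+1}`. -/
def linf {d : ℕ} (v : Lat d) : ℕ := Finset.univ.sup fun i => (v i).natAbs

/-- `ℓ^∞`-distance induced on the cylinder. -/
noncomputable def cylDist (d N : ℕ) (x y : Cyl d N) : ℕ :=
  sInf {r : ℕ | ∃ v : Lat d, projE d N v = y - x ∧ linf v = r}

/-- `S` has `ℓ^∞`-diameter at least `L`. -/
def diamGE (d N : ℕ) (S : Set (Cyl d N)) (L : ℕ) : Prop :=
  ∃ x ∈ S, ∃ y ∈ S, L ≤ cylDist d N x y

/-- `X_{[0,n]}`: the set of points visited up to time `n`. -/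
def ran {X : Type*} (ω : ℕ → X) (n : ℕ) : Set X := {y | ∃ i ≤ n, ω i = y}

/-- The set of points visited up to the (possibly infinite) time `t`. -/
def ranE {X : Type*} (ω : ℕ → X) (t : ℕ∞) : Set X :=
  {y | ∃ i : ℕ, (i : ℕ∞) ≤ t ∧ ω i = y}

/-- `L_m`: projections to `E` of `m`-dimensional affine coordinate lattices of `ℤ^{d+1}`. -/
def Lcoll (d N m : ℕ) : Set (Set (Cyl d N)) :=
  {F | ∃ I : Finset (Fin (d + 1)), I.card = m ∧ ∃ y : Lat d,
      F = (fun v => projE d N (y + v)) '' {v : Lat d | ∀ i ∉ I, v i = 0}}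

/-- `A^j_m`: nonempty subsets of `C_j` contained in some `F ∈ L_m`. -/
def Adm (d N : ℕ) (j : ℤ) (m : ℕ) : Set (Finset (Cyl d N)) :=
  {A | A.Nonempty ∧ ↑A ⊆ Cblk d N j ∧ ∃ F ∈ Lcoll d N m, (↑A : Set (Cyl d N)) ⊆ F}

/-- The segment `{x + k·e : 0 ≤ k ≤ L}` (addition via `π_E`). -/
def segment (d N : ℕ) (x : Cyl d N) (e : Lat d) (L : ℕ) : Set (Cyl d N) :=
  {y | ∃ k : ℕ, k ≤ L ∧ y = x + projE d N ((k : ℤ) • e)}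

/-- The event `V_{K,j,t}` (with `k = ⌊t⌋` excursions). -/
def Vev (d N : ℕ) (K : ℝ) (j : ℤ) (k : ℕ) : Set (ℕ → Cyl d N) :=
  {ω | ∀ x ∈ Cblk d N j, ∀ e ∈ unitVecs d, ∃ i : ℕ, (i : ℝ) < Real.sqrt N ∧
      ∀ l : ℕ, i ≤ l → l ≤ i + ⌊K * Real.log N⌋₊ →
        x + projE d N ((l : ℤ) • e) ∉ ranE ω (DD d N j k ω)}

/-- The event `U_{K,j,t}` (with `k = ⌊t⌋` excursions). -/
def Uev (d N : ℕ) (K : ℝ) (j : ℤ) (k : ℕ) : Set (ℕ → Cyl d N) :=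
  {ω | ∀ F ∈ Lcoll d N 2, ∀ n : ℕ, (n : ℕ∞) ≤ DD d N j k ω →
      ∀ O₁ O₂ : Set (Cyl d N),
        O₁ ⊆ (F ∩ Cblk d N j) \ ran ω n → O₂ ⊆ (F ∩ Cblk d N j) \ ran ω n →
        IsConnIn d N O₁ → IsConnIn d N O₂ →
        diamGE d N O₁ ⌊K * Real.log N⌋₊ → diamGE d N O₂ ⌊K * Real.log N⌋₊ →
        ∀ p ∈ O₁, ∀ q ∈ O₂, connIn d N ((F ∩ Cblk d N j) \ ran ω n) p q}

/-- A (finite) set `S` disconnects the cylinder. -/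
def Disconnects (d N : ℕ) (S : Set (Cyl d N)) : Prop :=
  S.Finite ∧ ∃ M₀ : ℕ, ∀ M : ℕ, M₀ ≤ M → ∀ x y : Cyl d N,
    (M : ℤ) ≤ x.2 → y.2 ≤ -(M : ℤ) → ¬ connIn d N Sᶜ x y

/-- The disconnection time `T_N`. -/
noncomputable def discT (d N : ℕ) (ω : ℕ → Cyl d N) : ℕ∞ :=
  sInf {t : ℕ∞ | ∃ n : ℕ, Disconnects d N (ran ω n) ∧ t = n}

/-- `r ≤ t` for `t : ℕ∞` and a real threshold `r` (trivially true when `t = ⊤`). -/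
def geReal (t : ℕ∞) (r : ℝ) : Prop := ∀ n : ℕ, t = (n : ℕ∞) → r ≤ n

/-- `r < t` for `t : ℕ∞` and a real threshold `r` (trivially true when `t = ⊤`). -/
def gtReal (t : ℕ∞) (r : ℝ) : Prop := ∀ n : ℕ, t = (n : ℕ∞) → r < n

/-- `φ_j(z) = E_z[exp(λ Σ_{x∈A} 1{H_x < T_{B̃_j}})]`. -/
noncomputable def phi (d N : ℕ) (Pl : Cyl d N → Measure (ℕ → Cyl d N)) (j : ℤ) (lam : ℝ)
    (A : Finset (Cyl d N)) (z : Cyl d N) : ℝ :=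
  ∫ ω, Real.exp (lam * ∑ x ∈ A, if entT {x} ω < exitT (Btl d N j) ω then (1 : ℝ) else 0)
    ∂(Pl z)

/-- `‖φ_j‖_∞`. -/
noncomputable def phiSup (d N : ℕ) (Pl : Cyl d N → Measure (ℕ → Cyl d N)) (j : ℤ) (lam : ℝ)
    (A : Finset (Cyl d N)) : ℝ :=
  ⨆ z : Cyl d N, phi d N Pl j lam A z

/-- `q_N = sup {P_z[H_F < T_{B̃_j}] : F ∈ L_m, z ∈ ∂F}`. -/
noncomputable def qNval (d N m : ℕ) (Pl : Cyl d N → Measure (ℕ → Cyl d N)) (j : ℤ) : ℝ :=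
  sSup {r : ℝ | ∃ F ∈ Lcoll d N m, ∃ z ∈ bdry d N F,
      r = ((Pl z) {ω | entT F ω < exitT (Btl d N j) ω}).toReal}

/-- The times `τ_k`: `τ_0` is the entrance time of `(ℤ/Nℤ)^d × Nℤ`, and `τ_{k+1}` is the
first time after `τ_k` at which the vertical component has moved by exactly `N`. -/
noncomputable def tauT (d N : ℕ) : ℕ → (ℕ → Cyl d N) → ℕ∞
  | 0, ω => entT {x : Cyl d N | (N : ℤ) ∣ x.2} ω
  | k + 1, ω =>
      (tauT d N k ω).recTopCoe ⊤ fun m =>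
        sInf {t : ℕ∞ | ∃ n : ℕ, m < n ∧ ((ω n).2 - (ω m).2).natAbs = N ∧ t = n}

/-- `*`-adjacency on `ℤ²`. -/
def starAdj (x y : ℤ × ℤ) : Prop :=
  x ≠ y ∧ (x.1 - y.1).natAbs ≤ 1 ∧ (x.2 - y.2).natAbs ≤ 1



lemma ind_cos (N : ℕ) (hN : 1 ≤ N) (x : ℤ) :
    (if (N : ℤ) ∣ x then (1:ℝ) else 0) =
      (N:ℝ)⁻¹ * ∑ k : Fin N, Real.cos (2 * Real.pi * ((k:ℕ):ℝ) / N * x) := by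
  have hN0 : (N:ℝ) ≠ 0 := by positivity
  rw [Fin.sum_univ_eq_sum_range (fun k : ℕ => Real.cos (2 * Real.pi * (k:ℝ) / N * x)) N]
  split_ifs with h
  · obtain ⟨m, rfl⟩ := h
    have : ∀ k ∈ Finset.range N, Real.cos (2 * Real.pi * (k:ℝ) / N * ((N * m : ℤ) : ℝ)) = 1 := by
      intro k _
      have : 2 * Real.pi * (k:ℝ) / N * ((N * m : ℤ) : ℝ) = ((k * m : ℤ) : ℝ) * (2 * Real.pi) := by
        push_cast; field_simp
      rw [this, Real.cos_int_mul_two_pi]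
    rw [Finset.sum_congr rfl this]; simp [hN0]
  · have hc : ∑ k ∈ Finset.range N, (Complex.exp (2 * Real.pi * x / N * Complex.I)) ^ k = 0 := by
      have hNc : (N:ℂ) ≠ 0 := by exact_mod_cast hN0
      rw [geom_sum_eq]
      · rw [← Complex.exp_nat_mul]
        have : (N:ℂ) * (2 * Real.pi * x / N * Complex.I) = x * (2 * Real.pi * Complex.I) := by
          field_simp
        rw [this, Complex.exp_int_mul_two_pi_mul_I]; simp
      · intro h1
        rw [Complex.exp_eq_one_iff] at h1
        obtain ⟨m, hm⟩ := h1
        apply h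
        refine ⟨m, ?_⟩
        have hpi : (Real.pi:ℂ) ≠ 0 := by exact_mod_cast Real.pi_ne_zero
        have : (x:ℂ) = N * m := by
          field_simp at hm
          have := hm
          linear_combination hm
        exact_mod_cast this
    have := congrArg Complex.re hc
    rw [Complex.re_sum] at this
    rw [eq_comm, mul_eq_zero]; right
    rw [Complex.zero_re] at this
    rw [← this]
    refine Finset.sum_congr rfl fun k _ => ?_
    rw [← Complex.exp_nat_mul]
    have : (k:ℂ) * (2 * Real.pi * x / N * Complex.I) = ((2 * Real.pi * (k:ℝ) / N * x : ℝ) : ℂ) * Complex.I := by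
      push_cast; ring
    rw [this, Complex.exp_ofReal_mul_I_re]

lemma sum_g (s : ℝ) (hs : 0 < s) (L : ℕ) :
    ∑ m ∈ Finset.range (L+1), 1 / (1 + s^2 * (m:ℝ)^2) ≤ 1 + (2/s) * (1 - 1 / (1 + s * L)) := by
  induction L with
  | zero => simp
  | succ L ih =>
    rw [Finset.sum_range_succ]
    have key : 1 / (1 + s^2 * ((L+1:ℕ):ℝ)^2) ≤ (2/s) * (1 / (1 + s * L) - 1 / (1 + s * ((L+1:ℕ):ℝ))) := by
      have h0 : (0:ℝ) ≤ s * L := by positivity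
      have e : (2/s) * (1 / (1 + s * L) - 1 / (1 + s * ((L+1:ℕ):ℝ))) = 2 / ((1 + s * L) * (1 + s * ((L+1:ℕ):ℝ))) := by
        push_cast; field_simp; ring
      rw [e, div_le_div_iff₀ (by positivity) (by positivity)]
      push_cast
      nlinarith [sq_nonneg (1 - s * (L + 1)), mul_nonneg h0 hs.le]
    linarith

lemma f_le (a : ℝ) (ha : 0 < a) (N : ℕ) (hN : 1 ≤ N) (j : ℕ) (hj : j < N) :
    1 / (1 + a/2 * Real.sin (Real.pi * j / N)^2) ≤
      1 / (1 + (Real.sqrt (2*a)/N)^2 * (j:ℝ)^2) + 1 / (1 + (Real.sqrt (2*a)/N)^2 * ((N - j : ℕ):ℝ)^2) := by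
  have hNp : (0:ℝ) < N := by positivity
  have main : ∀ t : ℝ, 0 ≤ t → t ≤ N / 2 → 1 / (1 + a/2 * Real.sin (Real.pi * t / N)^2) ≤
      1 / (1 + (Real.sqrt (2*a)/N)^2 * t^2) := by
    intro t ht0 ht
    have h1 : 2 / Real.pi * (Real.pi * t / N) ≤ Real.sin (Real.pi * t / N) := by
      apply Real.mul_le_sin (by positivity)
      rw [div_le_div_iff₀ hNp (by norm_num)]
      nlinarith [Real.pi_pos]
    have h2 : 2 / Real.pi * (Real.pi * t / N) = 2 * t / N := by
      field_simp
    rw [h2] at h1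
    have h3 : (2 * t / N)^2 ≤ Real.sin (Real.pi * t / N)^2 := by
      apply pow_le_pow_left₀ (by positivity) h1
    apply one_div_le_one_div_of_le (by positivity)
    have : (Real.sqrt (2*a)/N)^2 * t^2 = a/2 * (2 * t / N)^2 := by
      rw [div_pow, Real.sq_sqrt (by positivity)]; ring
    rw [this]
    gcongr
  rcases le_total (j:ℝ) (N/2) with h | h
  · have := main j (by positivity) h
    have h2 : 0 ≤ 1 / (1 + (Real.sqrt (2*a)/N)^2 * ((N - j : ℕ):ℝ)^2) := by positivity
    linarith
  · have hc : ((N - j : ℕ):ℝ) = N - j := by push_cast [hj.le]; ring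
    have := main (N - j : ℕ) (by positivity) (by rw [hc]; linarith)
    have e : Real.pi * ((N - j : ℕ):ℝ) / N = Real.pi - Real.pi * j / N := by
      rw [hc]; field_simp
    rw [e, Real.sin_pi_sub] at this
    have h2 : 0 ≤ 1 / (1 + (Real.sqrt (2*a)/N)^2 * (j:ℝ)^2) := by positivity
    linarith

lemma sum_even (f : ℕ → ℝ) (hf : ∀ j, 0 ≤ f j) (N : ℕ) :
    ∑ k ∈ Finset.range N, f (2*k) ≤ ∑ j ∈ Finset.range (2*N), f j := by
  induction N with
  | zero => simp
  | succ N ih =>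
    rw [Finset.sum_range_succ, show 2*(N+1) = 2*N+1+1 by ring, Finset.sum_range_succ, Finset.sum_range_succ]
    have := hf (2*N+1)
    linarith

lemma oned (a : ℝ) (ha : 0 < a) (N : ℕ) (hN : 1 ≤ N) :
    (N:ℝ)⁻¹ * ∑ k : Fin N, Real.exp (-(a * (1 - |Real.cos (2 * Real.pi * ((k:ℕ):ℝ) / N)|))) ≤
      4 / N + 8 / Real.sqrt (2*a) := by
  have hNp : (0:ℝ) < N := by positivity
  set f : ℕ → ℝ := fun j => 1 / (1 + a/2 * Real.sin (Real.pi * j / N)^2) with hfdef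
  have hf0 : ∀ j, 0 ≤ f j := fun j => by simp only [hfdef]; positivity
  set s := Real.sqrt (2*a)/N with hs
  have hsp : 0 < s := by positivity
  rw [Fin.sum_univ_eq_sum_range (fun k : ℕ => Real.exp (-(a * (1 - |Real.cos (2 * Real.pi * (k:ℝ) / N)|)))) N]
  have h1 : ∀ k ∈ Finset.range N, Real.exp (-(a * (1 - |Real.cos (2 * Real.pi * (k:ℝ) / N)|))) ≤ f (2*k) := by
    intro k _
    simp only [hfdef]
    have e : Real.pi * ((2*k:ℕ):ℝ) / N = 2 * Real.pi * (k:ℝ) / N := by push_cast; ring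
    rw [e]
    set c := Real.cos (2 * Real.pi * (k:ℝ) / N)
    have hc : |c| ≤ 1 := Real.abs_cos_le_one _
    have hsc : Real.sin (2 * Real.pi * (k:ℝ) / N)^2 = 1 - |c|^2 := by
      rw [sq_abs, Real.sin_sq]
    rw [hsc, Real.exp_neg, ← one_div]
    apply one_div_le_one_div_of_le
    · nlinarith [abs_nonneg c]
    · have := Real.add_one_le_exp (a * (1 - |c|))
      nlinarith [mul_nonneg ha.le (sq_nonneg (1 - |c|))]
  have hper : ∀ j, f (N + j) = f j := by
    intro j
    simp only [hfdef]
    have : Real.pi * ((N + j:ℕ):ℝ) / N = Real.pi * j / N + Real.pi := by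
      push_cast; field_simp; ring
    rw [this, Real.sin_add_pi, neg_sq]
  have h2 : ∑ j ∈ Finset.range (2*N), f j = 2 * ∑ j ∈ Finset.range N, f j := by
    rw [two_mul, Finset.sum_range_add, Finset.sum_congr rfl (fun j _ => hper j)]; ring
  set g : ℕ → ℝ := fun m => 1 / (1 + s^2 * (m:ℝ)^2) with hg
  have hg0 : ∀ j, 0 ≤ g j := fun j => by simp only [hg]; positivity
  have h3 : ∑ j ∈ Finset.range N, f j ≤ ∑ j ∈ Finset.range N, g j + ∑ j ∈ Finset.range N, g (N - j) := by
    rw [← Finset.sum_add_distrib]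
    exact Finset.sum_le_sum fun j hj => f_le a ha N hN j (Finset.mem_range.1 hj)
  have h4 : ∑ j ∈ Finset.range (N+1), g j ≤ 1 + 2/s := by
    have := sum_g s hsp N
    have h5 : 0 ≤ (2/s) * (1 / (1 + s * N)) := by positivity
    linarith
  have h5 : ∑ j ∈ Finset.range N, g j ≤ 1 + 2/s := by
    rw [Finset.sum_range_succ] at h4; linarith [hg0 N]
  have h6 : ∑ j ∈ Finset.range N, g (N - j) ≤ 1 + 2/s := by
    rw [← Finset.sum_range_reflect, Finset.sum_range_succ'] at h4
    have : ∑ j ∈ Finset.range N, g (N - j) ≤ ∑ j ∈ Finset.range (N+1), g (N - j) := by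
      rw [Finset.sum_range_succ]; linarith [hg0 (N-N)]
    refine this.trans ?_
    rw [Finset.sum_range_succ']
    simpa using h4
  have h7 := Finset.sum_le_sum h1
  have h8 := sum_even f hf0 N
  have : ∑ k ∈ Finset.range N, Real.exp (-(a * (1 - |Real.cos (2 * Real.pi * (k:ℝ) / N)|))) ≤ 4 * (1 + 2/s) := by
    linarith
  calc _ ≤ (N:ℝ)⁻¹ * (4 * (1 + 2/s)) := by gcongr
    _ = _ := by rw [hs]; field_simp; ring

def stp {ν : ℕ} (p : Fin ν × Bool) : ZLat ν := Pi.single p.1 (if p.2 then (1:ℤ) else -1)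

lemma stp_inj {ν : ℕ} : Function.Injective (stp : Fin ν × Bool → ZLat ν) := by
  rintro ⟨i, b⟩ ⟨j, c⟩ h
  have h1 := congrFun h i
  simp only [stp, Pi.single_eq_same] at h1
  have hij : i = j := by
    by_contra hne
    rw [Pi.single_eq_of_ne hne] at h1
    split_ifs at h1
    all_goals omega
  subst hij
  simp only [Pi.single_eq_same] at h1
  cases b <;> cases c <;> simp_all

lemma mem_unit {ν : ℕ} (v : ZLat ν) : v ∈ zUnitVecs ν ↔ ∃ p, stp p = v := by
  constructor
  · rintro ⟨i, h | h⟩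
    · exact ⟨(i, true), by simp [stp, h]⟩
    · exact ⟨(i, false), by simp [stp, h]⟩
  · rintro ⟨⟨i, b⟩, rfl⟩
    refine ⟨i, ?_⟩
    cases b <;> simp [stp]

lemma zStep_eq {ν : ℕ} (x y : ZLat ν) :
    zStep ν x y = (2 * ν : ℝ≥0∞)⁻¹ * ∑ p : Fin ν × Bool, if y = x + stp p then 1 else 0 := by
  unfold zStep
  split_ifs with h
  · obtain ⟨p, hp⟩ := (mem_unit _).1 h
    rw [Finset.sum_eq_single p]
    · rw [if_pos (by rw [hp]; abel), mul_one]
    · intro q _ hq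
      rw [if_neg]
      intro h2
      apply hq
      apply stp_inj
      rw [hp, h2]; abel
    · simp
  · rw [Finset.sum_eq_zero, mul_zero]
    intro p _
    rw [if_neg]
    intro h2
    exact h ((mem_unit _).2 ⟨p, by rw [h2]; abel⟩)

/-- Cylinder sets. -/
def cylSets (ν : ℕ) : Set (Set (ℕ → ZLat ν)) :=
  {S | ∃ (n : ℕ) (γ : ℕ → ZLat ν), S = {ω | ∀ i ≤ n, ω i = γ i}}

lemma cyl_meas {ν : ℕ} (n : ℕ) (γ : ℕ → ZLat ν) : MeasurableSet {ω : ℕ → ZLat ν | ∀ i ≤ n, ω i = γ i} := by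
  have : {ω : ℕ → ZLat ν | ∀ i ≤ n, ω i = γ i} = ⋂ i ∈ Set.Iic n, (fun ω => ω i) ⁻¹' {γ i} := by
    ext ω; simp
  rw [this]
  exact MeasurableSet.biInter (Set.to_countable _) fun i _ => measurable_pi_apply i (measurableSet_singleton _)

lemma cyl_pi (ν : ℕ) : IsPiSystem (cylSets ν) := by
  rintro _ ⟨n, γ, rfl⟩ _ ⟨m, δ, rfl⟩ ⟨ω, h1, h2⟩
  refine ⟨max n m, ω, ?_⟩
  ext η
  simp only [Set.mem_inter_iff, Set.mem_ofPred_eq] at *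
  constructor
  · rintro ⟨h3, h4⟩ i hi
    rcases le_max_iff.1 hi with h | h
    · rw [h3 i h, h1 i h]
    · rw [h4 i h, h2 i h]
  · intro h
    exact ⟨fun i hi => by rw [h i (hi.trans (le_max_left _ _)), h1 i hi],
      fun i hi => by rw [h i (hi.trans (le_max_right _ _)), h2 i hi]⟩

lemma cyl_gen (ν : ℕ) : (MeasurableSpace.pi : MeasurableSpace (ℕ → ZLat ν)) =
    MeasurableSpace.generateFrom (cylSets ν) := by
  apply le_antisymm
  · refine iSup_le fun n => ?_
    rw [← measurable_iff_comap_le]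
    let := MeasurableSpace.generateFrom (cylSets ν)
    have : @Measurable _ _ (MeasurableSpace.generateFrom (cylSets ν)) _
        (fun (ω : ℕ → ZLat ν) (i : Fin (n+1)) => ω i) := by
      apply @measurable_to_countable' _ _ _ _ (MeasurableSpace.generateFrom (cylSets ν))
      intro g
      apply MeasurableSpace.measurableSet_generateFrom
      refine ⟨n, fun i => if h : i < n+1 then g ⟨i, h⟩ else 0, ?_⟩
      ext ω
      simp only [Set.mem_preimage, Set.mem_singleton_iff, Set.mem_ofPred_eq, funext_iff]
      constructor
      · intro h i hi
        rw [dif_pos (by omega)]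
        intro j
        rw [← h ⟨i, by omega⟩]
      · intro h i j
        have := h i (by omega)
        rw [dif_pos i.2] at this
        exact congrFun (funext this) j
    have h2 : Measurable (fun f : Fin (n+1) → ZLat ν => f (Fin.last n)) := measurable_pi_apply _
    exact @Measurable.comp _ _ _ (MeasurableSpace.generateFrom (cylSets ν)) _ _ _ _ h2 this
  · apply MeasurableSpace.generateFrom_le
    rintro _ ⟨n, γ, rfl⟩
    exact cyl_meas n γ

lemma uniq {ν : ℕ} (μ μ' : Measure (ℕ → ZLat ν)) [IsProbabilityMeasure μ] [IsProbabilityMeasure μ']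
    (h : ∀ (n : ℕ) (γ : ℕ → ZLat ν), μ {ω | ∀ i ≤ n, ω i = γ i} = μ' {ω | ∀ i ≤ n, ω i = γ i}) :
    μ = μ' := by
  apply ext_of_generate_finite (cylSets ν) (cyl_gen ν) (cyl_pi ν)
  · rintro _ ⟨n, γ, rfl⟩
    exact h n γ
  · simp

def consW {ν : ℕ} (x : ZLat ν) (ω : ℕ → ZLat ν) : ℕ → ZLat ν
  | 0 => x
  | n+1 => ω n

lemma consW_meas {ν : ℕ} (x : ZLat ν) : Measurable (consW x) := by
  apply measurable_pi_lambda
  intro n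
  cases n with
  | zero => exact measurable_const
  | succ n => exact measurable_pi_apply n

lemma markov {ν : ℕ} (hν : 1 ≤ ν) (Q : ZLat ν → Measure (ℕ → ZLat ν)) (hQ : IsLatRW ν Q) (x : ZLat ν) :
    Q x = (2 * ν : ℝ≥0∞)⁻¹ • ∑ p : Fin ν × Bool, (Q (x + stp p)).map (consW x) := by
  have := hQ.1
  have hν0 : (2 * ν : ℝ≥0∞) ≠ 0 := by
    simp; omega
  have hνt : (2 * ν : ℝ≥0∞) ≠ ⊤ := ENNReal.mul_ne_top (by simp) (by simp)
  have : IsProbabilityMeasure ((2 * ν : ℝ≥0∞)⁻¹ • ∑ p : Fin ν × Bool, (Q (x + stp p)).map (consW x)) := by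
    constructor
    rw [Measure.smul_apply, Measure.finsetSum_apply]
    have : ∀ p ∈ (Finset.univ : Finset (Fin ν × Bool)), (Q (x + stp p)).map (consW x) Set.univ = 1 := by
      intro p _
      rw [Measure.map_apply (consW_meas x) MeasurableSet.univ]
      simp
    rw [Finset.sum_congr rfl this]
    simp only [Finset.sum_const, Finset.card_univ, Fintype.card_prod, Fintype.card_fin, Fintype.card_bool, smul_eq_mul, nsmul_eq_mul, mul_one]
    push_cast
    rw [mul_comm (ν : ℝ≥0∞) 2]
    exact ENNReal.inv_mul_cancel hν0 hνt
  apply uniq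
  intro n γ
  rw [hQ.2, Measure.smul_apply, Measure.finsetSum_apply]
  simp only [Measure.map_apply (consW_meas x) (cyl_meas _ _)]
  by_cases h0 : γ 0 = x
  · cases n with
    | zero =>
      have : consW x ⁻¹' {ω | ∀ i ≤ 0, ω i = γ i} = Set.univ := by
        ext ω; simp [consW, h0]
      simp only [this, measure_univ, Finset.sum_const, Finset.card_univ, Fintype.card_prod, Fintype.card_fin, Fintype.card_bool, smul_eq_mul, nsmul_eq_mul, mul_one]
      push_cast
      rw [mul_comm (ν : ℝ≥0∞) 2, ENNReal.inv_mul_cancel hν0 hνt]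
      simp [h0]
    | succ n =>
      have : consW x ⁻¹' {ω | ∀ i ≤ n+1, ω i = γ i} = {ω | ∀ i ≤ n, ω i = γ (i+1)} := by
        ext ω
        simp only [Set.mem_preimage, Set.mem_ofPred_eq]
        constructor
        · intro h i hi
          exact h (i+1) (by omega)
        · intro h i hi
          cases i with
          | zero => exact h0.symm
          | succ i => exact h i (by omega)
      simp only [this, hQ.2 _ n (fun i => γ (i+1))]
      rw [← Finset.sum_mul, smul_eq_mul, ← mul_assoc, Finset.prod_range_succ', mul_comm (∏ i ∈ _, _), if_pos h0, one_mul, zStep_eq, h0]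
  · have : consW x ⁻¹' {ω | ∀ i ≤ n, ω i = γ i} = ∅ := by
      ext ω
      simp only [Set.mem_preimage, Set.mem_ofPred_eq, Set.mem_empty_iff_false, iff_false]
      intro h
      exact h0 (h 0 (by omega)).symm
    simp [this, h0]

lemma markov_real {ν : ℕ} (hν : 1 ≤ ν) (Q : ZLat ν → Measure (ℕ → ZLat ν)) (hQ : IsLatRW ν Q) (x : ZLat ν)
    (S : Set (ℕ → ZLat ν)) (hS : MeasurableSet S) :
    (Q x).real S = (2 * ν : ℝ)⁻¹ * ∑ p : Fin ν × Bool, (Q (x + stp p)).real (consW x ⁻¹' S) := by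
  have := hQ.1
  simp only [Measure.real]
  conv_lhs => rw [markov hν Q hQ x]
  rw [Measure.smul_apply, Measure.finsetSum_apply, smul_eq_mul, ENNReal.toReal_mul, ENNReal.toReal_inv, ENNReal.toReal_sum]
  · simp [Measure.map_apply (consW_meas x) hS]
  · intro p _
    rw [Measure.map_apply (consW_meas x) hS]
    exact measure_ne_top _ _

lemma zero_law {ν : ℕ} (Q : ZLat ν → Measure (ℕ → ZLat ν)) (hQ : IsLatRW ν Q) (x : ZLat ν)
    (B : Set (ZLat ν)) : (Q x).real {ω | ω 0 ∈ B} = if x ∈ B then 1 else 0 := by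
  have := hQ.1
  have h := hQ.2 x 0 (fun _ => x)
  simp only [if_true, Finset.range_zero, Finset.prod_empty, mul_one] at h
  have hm := cyl_meas (ν := ν) 0 (fun _ => x)
  have hc : Q x {ω | ∀ i ≤ 0, ω i = x}ᶜ = 0 := (prob_compl_eq_zero_iff hm).2 h
  split_ifs with hx
  · have : Q x {ω | ω 0 ∈ B} = 1 := by
      apply le_antisymm prob_le_one
      rw [← h]
      apply measure_mono
      intro ω hω
      simp only [Set.mem_ofPred_eq] at *
      rw [hω 0 le_rfl]; exact hx
    simp [Measure.real, this]
  · have : Q x {ω | ω 0 ∈ B} = 0 := by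
      apply measure_mono_null _ hc
      intro ω hω h2
      simp only [Set.mem_ofPred_eq] at *
      rw [h2 0 le_rfl] at hω
      exact hx hω
    simp [Measure.real, this]

lemma ev_meas {ν : ℕ} (n : ℕ) (B : Set (ZLat ν)) : MeasurableSet {ω : ℕ → ZLat ν | ω n ∈ B} :=
  measurable_pi_apply n (Set.to_countable B).measurableSet

lemma step_law {ν : ℕ} (hν : 1 ≤ ν) (Q : ZLat ν → Measure (ℕ → ZLat ν)) (hQ : IsLatRW ν Q) (x : ZLat ν)
    (n : ℕ) (B : Set (ZLat ν)) : (Q x).real {ω | ω (n+1) ∈ B} =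
      (2 * ν : ℝ)⁻¹ * ∑ p : Fin ν × Bool, (Q (x + stp p)).real {ω | ω n ∈ B} := by
  rw [markov_real hν Q hQ x _ (ev_meas _ _)]
  rfl

lemma stp_abs {ν : ℕ} (p : Fin ν × Bool) (i : Fin ν) : |stp p i| ≤ 1 := by
  unfold stp
  by_cases h : i = p.1
  · subst h; rw [Pi.single_eq_same]; split_ifs <;> simp
  · rw [Pi.single_eq_of_ne h]; simp

lemma speed {ν : ℕ} (hν : 1 ≤ ν) (Q : ZLat ν → Measure (ℕ → ZLat ν)) (hQ : IsLatRW ν Q)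
    (B : Set (ZLat ν)) (n : ℕ) : ∀ x : ZLat ν, (∀ y ∈ B, ∃ i, (n:ℤ) < |y i - x i|) →
      (Q x).real {ω | ω n ∈ B} = 0 := by
  induction n with
  | zero =>
    intro x h
    rw [zero_law Q hQ, if_neg]
    intro hx
    obtain ⟨i, hi⟩ := h x hx
    simp at hi
  | succ n ih =>
    intro x h
    rw [step_law hν Q hQ, Finset.sum_eq_zero, mul_zero]
    intro p _
    apply ih
    intro y hy
    obtain ⟨i, hi⟩ := h y hy
    refine ⟨i, ?_⟩
    have h1 := stp_abs p i
    have h2 : |y i - x i| ≤ |y i - (x + stp p) i| + |stp p i| := by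
      have := abs_add_le (y i - (x + stp p) i) (stp p i)
      rwa [Pi.add_apply, show y i - (x i + stp p i) + stp p i = y i - x i by ring] at this
    push_cast at hi
    linarith

/-- signed coordinate swap -/
def sg {ν : ℕ} (j : Fin ν) (p : Fin ν × Bool) (v : ZLat ν) : ZLat ν :=
  fun i => (if p.2 then (1:ℤ) else -1) * v (Equiv.swap j p.1 i)

lemma sg_invol {ν : ℕ} (j : Fin ν) (p : Fin ν × Bool) (v : ZLat ν) : sg j p (sg j p v) = v := by
  funext i
  unfold sg
  rw [Equiv.swap_apply_self, ← mul_assoc]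
  split_ifs <;> simp

lemma sg_sub {ν : ℕ} (j : Fin ν) (p : Fin ν × Bool) (v w : ZLat ν) : sg j p (v - w) = sg j p v - sg j p w := by
  funext i
  simp [sg, mul_sub]

lemma sg_single {ν : ℕ} (j : Fin ν) (p : Fin ν × Bool) (k : Fin ν) (c : ℤ) :
    sg j p (Pi.single k c) = Pi.single (Equiv.swap j p.1 k) ((if p.2 then (1:ℤ) else -1) * c) := by
  funext i
  unfold sg
  by_cases h : i = Equiv.swap j p.1 k
  · subst h; simp
  · rw [Pi.single_eq_of_ne h, Pi.single_eq_of_ne, mul_zero]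
    intro h2
    apply h
    rw [← h2, Equiv.swap_apply_self]

lemma sg_unit {ν : ℕ} (j : Fin ν) (p : Fin ν × Bool) (v : ZLat ν) (hv : v ∈ zUnitVecs ν) :
    sg j p v ∈ zUnitVecs ν := by
  obtain ⟨i, h | h⟩ := hv
  · subst h
    refine ⟨Equiv.swap j p.1 i, ?_⟩
    rw [sg_single]
    split_ifs <;> simp
  · subst h
    refine ⟨Equiv.swap j p.1 i, ?_⟩
    rw [sg_single]
    split_ifs <;> simp

lemma sg_step {ν : ℕ} (j : Fin ν) (p : Fin ν × Bool) (x y : ZLat ν) :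
    zStep ν (sg j p x) (sg j p y) = zStep ν x y := by
  unfold zStep
  rw [← sg_sub]
  have : sg j p (y - x) ∈ zUnitVecs ν ↔ y - x ∈ zUnitVecs ν :=
    ⟨fun h => by have := sg_unit j p _ h; rwa [sg_invol] at this, sg_unit j p _⟩
  simp only [this]

lemma sym {ν : ℕ} (Q : ZLat ν → Measure (ℕ → ZLat ν)) (hQ : IsLatRW ν Q) (x : ZLat ν)
    (j : Fin ν) (p : Fin ν × Bool) :
    Q (sg j p x) = (Q x).map (fun ω n => sg j p (ω n)) := by
  have := hQ.1
  have hm : Measurable (fun (ω : ℕ → ZLat ν) n => sg j p (ω n)) := by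
    apply measurable_pi_lambda
    intro n
    exact (measurable_of_countable (sg j p)).comp (measurable_pi_apply (X := fun _ : ℕ => ZLat ν) n)
  have : IsProbabilityMeasure ((Q x).map (fun ω n => sg j p (ω n))) :=
    Measure.isProbabilityMeasure_map hm.aemeasurable
  apply uniq
  intro n γ
  rw [Measure.map_apply hm (cyl_meas _ _)]
  have hiff : ∀ a b : ZLat ν, sg j p a = b ↔ a = sg j p b := fun a b =>
    ⟨fun h => by rw [← h, sg_invol], fun h => by rw [h, sg_invol]⟩
  have : (fun (ω : ℕ → ZLat ν) n => sg j p (ω n)) ⁻¹' {ω | ∀ i ≤ n, ω i = γ i} =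
      {ω | ∀ i ≤ n, ω i = sg j p (γ i)} := by
    ext ω
    simp [hiff]
  rw [this, hQ.2, hQ.2 x n (fun i => sg j p (γ i))]
  simp only [sg_step, hiff]

lemma hit_eq {ν : ℕ} (hν : 1 ≤ ν) (Q : ZLat ν → Measure (ℕ → ZLat ν)) (hQ : IsLatRW ν Q) (j : Fin ν) :
    (Q 0).real {ω | ∃ n : ℕ, 1 ≤ n ∧ ω n = 0} = (Q (Pi.single j 1)).real {ω | ∃ n : ℕ, ω n = 0} := by
  have := hQ.1
  have hmeas1 : MeasurableSet {ω : ℕ → ZLat ν | ∃ n : ℕ, ω n = 0} := by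
    have : {ω : ℕ → ZLat ν | ∃ n : ℕ, ω n = 0} = ⋃ n, {ω | ω n ∈ ({0} : Set (ZLat ν))} := by
      ext ω; simp
    rw [this]
    exact MeasurableSet.iUnion fun n => ev_meas n _
  have hmeas2 : MeasurableSet {ω : ℕ → ZLat ν | ∃ n : ℕ, 1 ≤ n ∧ ω n = 0} := by
    have : {ω : ℕ → ZLat ν | ∃ n : ℕ, 1 ≤ n ∧ ω n = 0} = ⋃ n, {ω | ω (n+1) ∈ ({0} : Set (ZLat ν))} := by
      ext ω
      simp only [Set.mem_ofPred_eq, Set.mem_iUnion, Set.mem_singleton_iff]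
      exact ⟨fun ⟨n, h1, h2⟩ => ⟨n-1, by rwa [Nat.sub_add_cancel h1]⟩, fun ⟨n, h⟩ => ⟨n+1, by omega, h⟩⟩
    rw [this]
    exact MeasurableSet.iUnion fun n => ev_meas _ _
  rw [markov_real hν Q hQ 0 _ hmeas2]
  have hpre : consW (0 : ZLat ν) ⁻¹' {ω | ∃ n : ℕ, 1 ≤ n ∧ ω n = 0} = {ω | ∃ n : ℕ, ω n = 0} := by
    ext ω
    simp only [Set.mem_ofPred_eq, Set.mem_preimage]
    constructor
    · rintro ⟨n, h1, h2⟩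
      cases n with
      | zero => omega
      | succ n => exact ⟨n, h2⟩
    · rintro ⟨n, h⟩
      exact ⟨n+1, by omega, h⟩
  rw [hpre]
  have : ∀ p ∈ (Finset.univ : Finset (Fin ν × Bool)), (Q (0 + stp p)).real {ω | ∃ n : ℕ, ω n = 0} =
      (Q (Pi.single j 1)).real {ω | ∃ n : ℕ, ω n = 0} := by
    intro p _
    have e : 0 + stp p = sg j p (Pi.single j 1) := by
      rw [sg_single]; simp [stp]
    rw [e, sym Q hQ]
    have hm : Measurable (fun (ω : ℕ → ZLat ν) n => sg j p (ω n)) := by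
      apply measurable_pi_lambda
      intro n
      exact (measurable_of_countable (sg j p)).comp (measurable_pi_apply (X := fun _ : ℕ => ZLat ν) n)
    rw [map_measureReal_apply hm hmeas1]
    congr 1
    ext ω
    simp only [Set.mem_ofPred_eq, Set.mem_preimage]
    have hz : sg j p (0 : ZLat ν) = 0 := by funext i; simp [sg]
    refine exists_congr fun n => ⟨fun h => ?_, fun h => by rw [h, hz]⟩
    rw [← sg_invol j p (ω n), h, hz]
  rw [Finset.sum_congr rfl this]
  simp only [Finset.sum_const, Finset.card_univ, Fintype.card_prod, Fintype.card_fin, Fintype.card_bool, nsmul_eq_mul]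
  have : (ν:ℝ) ≠ 0 := by positivity
  push_cast
  field_simp

lemma eig {ν : ℕ} (hν : 1 ≤ ν) (θ : Fin ν → ℝ) (x : ZLat ν) :
    (2 * ν : ℝ)⁻¹ * ∑ p : Fin ν × Bool, ∏ j, Real.cos (θ j * ((x + stp p) j : ℤ)) =
      ((ν:ℝ)⁻¹ * ∑ j, Real.cos (θ j)) * ∏ j, Real.cos (θ j * (x j : ℤ)) := by
  have hν0 : (ν:ℝ) ≠ 0 := by positivity
  rw [Fintype.sum_prod_type]
  have key : ∀ i ∈ (Finset.univ : Finset (Fin ν)), ∑ b : Bool, ∏ j, Real.cos (θ j * ((x + stp (i, b)) j : ℤ)) =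
      2 * (Real.cos (θ i) * ∏ j, Real.cos (θ j * (x j : ℤ))) := by
    intro i _
    rw [Fintype.sum_bool]
    have h : ∀ b, ∏ j, Real.cos (θ j * ((x + stp (i, b)) j : ℤ)) =
        Real.cos (θ i * (x i + (if b then (1:ℝ) else -1))) * ∏ j ∈ Finset.univ.erase i, Real.cos (θ j * (x j : ℤ)) := by
      intro b
      rw [← Finset.mul_prod_erase Finset.univ _ (Finset.mem_univ i)]
      congr 1
      · simp [stp]
      · refine Finset.prod_congr rfl fun j hj => ?_
        have : j ≠ i := Finset.ne_of_mem_erase hj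
        simp [stp, Pi.single_eq_of_ne this]
    rw [h, h, ← Finset.mul_prod_erase Finset.univ _ (Finset.mem_univ i)]
    simp only [if_true, Bool.false_eq_true, if_false]
    rw [show θ i * ((x i : ℝ) + 1) = θ i * x i + θ i by ring,
      show θ i * ((x i : ℝ) + -1) = θ i * x i - θ i by ring, Real.cos_add, Real.cos_sub]
    ring
  rw [Finset.sum_congr rfl key, ← Finset.mul_sum, ← Finset.sum_mul]
  field_simp

/-- the sublattice `Nℤ^ν` -/
def subl (ν N : ℕ) : Set (ZLat ν) := {y | ∀ i, (N : ℤ) ∣ y i}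

lemma fourier {ν : ℕ} (hν : 1 ≤ ν) (Q : ZLat ν → Measure (ℕ → ZLat ν)) (hQ : IsLatRW ν Q)
    (N : ℕ) (hN : 1 ≤ N) (n : ℕ) : ∀ x : ZLat ν, (Q x).real {ω | ω n ∈ subl ν N} =
      ((N:ℝ)⁻¹)^ν * ∑ k : Fin ν → Fin N,
        ((ν:ℝ)⁻¹ * ∑ j, Real.cos (2 * Real.pi * ((k j : ℕ):ℝ) / N)) ^ n *
          ∏ j, Real.cos (2 * Real.pi * ((k j : ℕ):ℝ) / N * (x j : ℤ)) := by
  induction n with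
  | zero =>
    intro x
    rw [zero_law Q hQ]
    have h1 : (if x ∈ subl ν N then (1:ℝ) else 0) = ∏ i, if (N:ℤ) ∣ x i then (1:ℝ) else 0 := by
      rw [Finset.prod_ite_zero]
      simp only [subl, Set.mem_ofPred_eq, Finset.mem_univ, true_implies, Finset.prod_const_one]
      congr
    rw [h1, Finset.prod_congr rfl (fun i _ => ind_cos N hN (x i)), Finset.prod_mul_distrib, Finset.prod_univ_sum,
      Fintype.piFinset_univ]
    simp
  | succ n ih =>
    intro x
    rw [step_law hν Q hQ]
    simp only [ih]
    rw [← Finset.mul_sum, Finset.sum_comm, mul_left_comm]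
    congr 1
    rw [Finset.mul_sum]
    refine Finset.sum_congr rfl fun k _ => ?_
    rw [← Finset.mul_sum, mul_left_comm, eig hν (fun j => 2 * Real.pi * ((k j : ℕ):ℝ) / N) x]
    ring

lemma heat {ν : ℕ} (hν : 1 ≤ ν) (Q : ZLat ν → Measure (ℕ → ZLat ν)) (hQ : IsLatRW ν Q)
    (N : ℕ) (hN : 1 ≤ N) (n : ℕ) (x : ZLat ν) : (Q x).real {ω | ω n ∈ subl ν N} ≤
      ((N:ℝ)⁻¹ * ∑ k : Fin N, Real.exp (-((n/ν:ℝ) * (1 - |Real.cos (2 * Real.pi * ((k:ℕ):ℝ) / N)|)))) ^ ν := by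
  have hν0 : (ν:ℝ) ≠ 0 := by positivity
  rw [fourier hν Q hQ N hN]
  have h1 := Finset.prod_univ_sum (fun _ : Fin ν => (Finset.univ : Finset (Fin N)))
    (fun _ k => Real.exp (-((n/ν:ℝ) * (1 - |Real.cos (2 * Real.pi * ((k:ℕ):ℝ) / N)|))))
  rw [Finset.prod_const, Finset.card_univ, Fintype.card_fin, Fintype.piFinset_univ] at h1
  rw [mul_pow, h1]
  apply mul_le_mul_of_nonneg_left _ (by positivity)
  refine Finset.sum_le_sum fun k _ => ?_
  rw [← Real.exp_sum]
  refine (le_abs_self _).trans ?_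
  rw [abs_mul, abs_pow, Finset.abs_prod]
  have h2 : ∏ j, |Real.cos (2 * Real.pi * ((k j : ℕ):ℝ) / N * (x j : ℤ))| ≤ 1 :=
    Finset.prod_le_one (fun _ _ => abs_nonneg _) (fun _ _ => Real.abs_cos_le_one _)
  have h3 : |(ν:ℝ)⁻¹ * ∑ j, Real.cos (2 * Real.pi * ((k j : ℕ):ℝ) / N)| ≤
      Real.exp ((ν:ℝ)⁻¹ * ∑ j, (|Real.cos (2 * Real.pi * ((k j : ℕ):ℝ) / N)| - 1)) := by
    have := Real.add_one_le_exp ((ν:ℝ)⁻¹ * ∑ j, (|Real.cos (2 * Real.pi * ((k j : ℕ):ℝ) / N)| - 1))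
    refine le_trans ?_ this
    rw [Finset.sum_sub_distrib, abs_mul, abs_of_nonneg (by positivity : (0:ℝ) ≤ (ν:ℝ)⁻¹)]
    simp only [Finset.sum_const, Finset.card_univ, Fintype.card_fin, nsmul_eq_mul, mul_one]
    rw [mul_sub, inv_mul_cancel₀ hν0, sub_add_cancel]
    gcongr
    exact Finset.abs_sum_le_sum_abs _ _
  calc _ ≤ (Real.exp ((ν:ℝ)⁻¹ * ∑ j, (|Real.cos (2 * Real.pi * ((k j : ℕ):ℝ) / N)| - 1)))^n * 1 := by
        gcongr
    _ = _ := by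
        rw [mul_one, ← Real.exp_nat_mul]
        congr 1
        rw [Finset.mul_sum, Finset.mul_sum]
        refine Finset.sum_congr rfl fun j _ => ?_
        ring

lemma heat2 {ν : ℕ} (hν : 3 ≤ ν) (Q : ZLat ν → Measure (ℕ → ZLat ν)) (hQ : IsLatRW ν Q) (M : ℕ)
    (N : ℕ) (hN : 1 ≤ N) (n : ℕ) (hn : 1 ≤ n) (hnM : n < M * N^2) (x : ZLat ν) :
    (Q x).real {ω | ω n ∈ subl ν N} ≤ (4 * Real.sqrt M + 8 * Real.sqrt ν) ^ ν * (1 / (n:ℝ) ^ (3/2:ℝ)) := by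
  have hνp : (0:ℝ) < ν := by positivity
  have hnp : (0:ℝ) < n := by positivity
  have hNp : (0:ℝ) < N := by positivity
  refine (heat (by omega) Q hQ N hN n x).trans ?_
  have h1 := oned (n/ν:ℝ) (by positivity) N hN
  have h2 : 4 / (N:ℝ) ≤ 4 * Real.sqrt M / Real.sqrt n := by
    have : Real.sqrt n ≤ Real.sqrt M * N := by
      apply Real.sqrt_le_iff.2 ⟨by positivity, ?_⟩
      rw [mul_pow, Real.sq_sqrt (by positivity)]
      exact_mod_cast hnM.le
    rw [div_le_div_iff₀ hNp (by positivity)]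
    linarith
  have h3 : 8 / Real.sqrt (2 * (n/ν:ℝ)) ≤ 8 * Real.sqrt ν / Real.sqrt n := by
    have : Real.sqrt n ≤ Real.sqrt ν * Real.sqrt (2 * (n/ν:ℝ)) := by
      rw [← Real.sqrt_mul (by positivity)]
      apply Real.sqrt_le_sqrt
      have : (ν:ℝ) * (2 * (n/ν:ℝ)) = 2 * n := by field_simp
      rw [this]; linarith
    rw [div_le_div_iff₀ (by positivity) (by positivity)]
    linarith
  have h4 : (N:ℝ)⁻¹ * ∑ k : Fin N, Real.exp (-((n/ν:ℝ) * (1 - |Real.cos (2 * Real.pi * ((k:ℕ):ℝ) / N)|))) ≤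
      (4 * Real.sqrt M + 8 * Real.sqrt ν) / Real.sqrt n := by
    rw [add_div]; linarith
  refine (pow_le_pow_left₀ (by positivity) h4 ν).trans ?_
  rw [div_pow, div_eq_mul_one_div]
  apply mul_le_mul_of_nonneg_left _ (by positivity)
  apply one_div_le_one_div_of_le (by positivity)
  have h5 : (n:ℝ) ^ (3/2:ℝ) = Real.sqrt n ^ 3 := by
    rw [Real.sqrt_eq_rpow, ← Real.rpow_natCast, ← Real.rpow_mul hnp.le]
    norm_num
  rw [h5]
  apply pow_le_pow_right₀ _ hν
  rw [Real.one_le_sqrt]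
  exact_mod_cast hn

lemma main_bd {ν : ℕ} (hν : 3 ≤ ν) (Q : ZLat ν → Measure (ℕ → ZLat ν)) (hQ : IsLatRW ν Q) (M : ℕ)
    (j : Fin ν) (N : ℕ) (hN : 2 ≤ N) :
    (Q (Pi.single j 1)).real {ω | ∃ n : ℕ, n < M * N ^ 2 ∧ ∀ i, (N : ℤ) ∣ ω n i} ≤
      (Q 0).real {ω | ∃ n : ℕ, 1 ≤ n ∧ ω n = 0} +
      (4 * Real.sqrt M + 8 * Real.sqrt ν) ^ ν * ∑' k : ℕ, 1 / ((k + (N - 1) : ℕ):ℝ) ^ (3/2:ℝ) := by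
  have := hQ.1
  set C := (4 * Real.sqrt M + 8 * Real.sqrt ν) ^ ν with hC
  have hC0 : 0 ≤ C := by positivity
  set e : ZLat ν := Pi.single j 1 with he
  set B : Set (ZLat ν) := {y | y ∈ subl ν N ∧ y ≠ 0} with hB
  rw [hit_eq (by omega) Q hQ j]
  have hsub : {ω : ℕ → ZLat ν | ∃ n : ℕ, n < M * N ^ 2 ∧ ∀ i, (N : ℤ) ∣ ω n i} ⊆
      {ω | ∃ n : ℕ, ω n = 0} ∪ ⋃ n ∈ Finset.range (M * N^2), {ω | ω n ∈ B} := by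
    rintro ω ⟨n, h1, h2⟩
    by_cases h : ω n = 0
    · exact Or.inl ⟨n, h⟩
    · right
      simp only [Set.mem_iUnion]
      exact ⟨n, Finset.mem_range.2 h1, h2, h⟩
  refine (measureReal_mono hsub).trans ((measureReal_union_le _ _).trans ?_)
  apply add_le_add le_rfl
  refine (measureReal_biUnion_finset_le _ _).trans ?_
  have hsum : Summable (fun k : ℕ => 1 / ((k:ℕ):ℝ) ^ (3/2:ℝ)) := Real.summable_one_div_nat_rpow.2 (by norm_num)
  have hsum2 : Summable (fun k : ℕ => 1 / ((k + (N-1) : ℕ):ℝ) ^ (3/2:ℝ)) :=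
    (summable_nat_add_iff (f := fun k : ℕ => 1 / ((k:ℕ):ℝ) ^ (3/2:ℝ)) (N-1)).2 hsum
  have hz : ∀ n, n < N - 1 → (Q e).real {ω | ω n ∈ B} = 0 := by
    intro n hn
    apply speed (by omega) Q hQ
    rintro y ⟨hy, hy0⟩
    obtain ⟨i, hi⟩ := Function.ne_iff.1 hy0
    refine ⟨i, ?_⟩
    have h1 : (N:ℤ) ≤ |y i| := by
      apply Int.le_of_dvd (abs_pos.2 hi)
      exact (dvd_abs _ _).2 (hy i)
    have h2 : |e i| ≤ 1 := by
      have := stp_abs (j, true) i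
      simpa [stp] using this
    have h3 : |y i| ≤ |y i - e i| + |e i| := by
      have := abs_add_le (y i - e i) (e i)
      rwa [sub_add_cancel] at this
    omega
  have hle : ∀ n, n < M * N^2 → N - 1 ≤ n → (Q e).real {ω | ω n ∈ B} ≤ C * (1 / (n:ℝ) ^ (3/2:ℝ)) := by
    intro n h1 h2
    refine le_trans (measureReal_mono ?_) (heat2 hν Q hQ M N (by omega) n (by omega) h1 e)
    exact fun ω hω => hω.1
  have hstep : ∑ n ∈ Finset.range (M * N^2), (Q e).real {ω | ω n ∈ B} ≤
      ∑ k ∈ Finset.range (M * N^2), C * (1 / ((k + (N-1) : ℕ):ℝ) ^ (3/2:ℝ)) := by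
    have ha : ∑ n ∈ Finset.range (M * N^2), (Q e).real {ω | ω n ∈ B} ≤
        ∑ n ∈ Finset.Ico (N-1) (M * N^2), C * (1 / (n:ℝ) ^ (3/2:ℝ)) := by
      have hb : ∑ n ∈ Finset.Ico (N-1) (M * N^2), (Q e).real {ω | ω n ∈ B} =
          ∑ n ∈ Finset.range (M * N^2), (Q e).real {ω | ω n ∈ B} := by
        apply Finset.sum_subset
        · intro n hn
          exact Finset.mem_range.2 (Finset.mem_Ico.1 hn).2
        · intro n hn hn2
          apply hz
          rw [Finset.mem_Ico] at hn2
          rw [Finset.mem_range] at hn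
          omega
      rw [← hb]
      exact Finset.sum_le_sum fun n hn => hle n (Finset.mem_Ico.1 hn).2 (Finset.mem_Ico.1 hn).1
    refine ha.trans ?_
    rw [Finset.sum_Ico_eq_sum_range]
    simp only [add_comm (N-1)]
    apply Finset.sum_le_sum_of_subset_of_nonneg
    · exact Finset.range_mono (Nat.sub_le _ _)
    · intro k _ _; positivity
  refine hstep.trans ?_
  rw [← Finset.mul_sum]
  apply mul_le_mul_of_nonneg_left _ hC0
  exact hsum2.sum_le_tsum _ (fun k _ => by positivity)

/-- **(1.32).** For `ν ≥ 3` and `M ≥ 1`, for simple random walk on `ℤ^ν` started at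
`e₁`, `limsup_N Q_{e₁}[H_{Nℤ^ν} < M N²] ≤ q(ν)`. -/
theorem statement_17 (ν : ℕ) (hν : 3 ≤ ν) (M : ℕ) (hM : 1 ≤ M)
    (Q : ZLat ν → Measure (ℕ → ZLat ν)) (hQ : IsLatRW ν Q) :
    limsup (fun N : ℕ =>
        ((Q (Pi.single (⟨0, by omega⟩ : Fin ν) 1))
          {ω | ∃ n : ℕ, n < M * N ^ 2 ∧ ∀ i, (N : ℤ) ∣ ω n i}).toReal) atTop
      ≤ retProb ν Q := by
  have := hQ.1
  set C := (4 * Real.sqrt M + 8 * Real.sqrt ν) ^ ν with hC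
  have ht : Tendsto (fun N : ℕ => ∑' k : ℕ, 1 / ((k + N : ℕ):ℝ) ^ (3/2:ℝ)) atTop (nhds 0) :=
    tendsto_sum_nat_add (fun k : ℕ => 1 / ((k:ℕ):ℝ) ^ (3/2:ℝ))
  have ht2 : Tendsto (fun N : ℕ => retProb ν Q + C * ∑' k : ℕ, 1 / ((k + (N - 1) : ℕ):ℝ) ^ (3/2:ℝ)) atTop
      (nhds (retProb ν Q)) := by
    have h := ((ht.comp (tendsto_sub_atTop_nat 1)).const_mul C).const_add (retProb ν Q)
    rw [mul_zero, add_zero] at h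
    exact h
  rw [← ht2.limsup_eq]
  apply limsup_le_limsup
  · filter_upwards [eventually_ge_atTop 2] with N hN
    exact main_bd hν Q hQ M _ N hN
  · refine Filter.isCoboundedUnder_le_of_le (l := atTop) (x := 0) (fun N => ?_)
    exact ENNReal.toReal_nonneg
  · exact ht2.isBoundedUnder_le

end DiscCyl
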